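/- arXiv:1605.03310 — 6 statements merged into one kernel-verified Lean document; each statement's English description precedes it below -/
import Mathlib

section
/- Let g : ℝ → ℝ be continuous and let λ > 0. Define f : ℝ → ℝ by f(t) = g(t) + λ·1_{t ≠ 0}, where 1_{t ≠ 0} equals 0 if t = 0 and 1 otherwise. Then there exists τ > 0 (depending only on g and λ) such that every global minimizer t* of f (i.e., f(t*) ≤ f(t) for all t ∈ ℝ) satisfies either t* = 0 or |t*| ≥ τ. -/
open scoped Topology

theorem eventually_lt_add_of_lowerSemicontinuousAt {X M : Type*} [TopologicalSpace X]
    [AddCommGroup M] [PartialOrder M] [IsOrderedAddMonoid M] {g : X → M} {x₀ : X}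
    (hg : LowerSemicontinuousAt g x₀) {c : M} (hc : 0 < c) :
    ∀ᶠ x in 𝓝 x₀, g x₀ < g x + c :=
  (hg (g x₀ - c) (sub_lt_self _ hc)).mono fun _ hx => sub_lt_iff_lt_add.mp hx

theorem hard_thresholding_one_dim_general {E M : Type*} [SeminormedAddCommGroup E]
    [DecidableEq E] [AddCommGroup M] [PartialOrder M] [IsOrderedAddMonoid M] {g : E → M}
    (hg : LowerSemicontinuousAt g 0) {lam : M} (hlam : 0 < lam) {f : E → M}
    (hf : ∀ t, f t = g t + if t = 0 then 0 else lam) :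
    ∃ τ : ℝ, 0 < τ ∧ ∀ t, f t ≤ f 0 → t = 0 ∨ τ ≤ ‖t‖ := by
  obtain ⟨τ, hτ, hball⟩ :=
    Metric.eventually_nhds_iff.mp (eventually_lt_add_of_lowerSemicontinuousAt hg hlam)
  refine ⟨τ, hτ, fun t hle => ?_⟩
  by_contra! ⟨ht, hlt⟩
  have hgap : f 0 < f t := by
    simpa only [hf, if_pos, if_neg ht, add_zero] using hball (by rwa [dist_zero_right])
  exact hgap.not_ge hle

/-- Hard-thresholding property in one dimension: minimizing a continuous function plus
an `L₀` penalty `λ·1_{t ≠ 0}` forces every nonzero global minimizer away from zero by a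
fixed positive threshold depending only on `g` and `λ`. -/
theorem hard_thresholding_one_dim (g : ℝ → ℝ) (hg : Continuous g)
    (lam : ℝ) (hlam : 0 < lam)
    (f : ℝ → ℝ) (hf : ∀ t : ℝ, f t = g t + if t = 0 then 0 else lam) :
    ∃ τ : ℝ, 0 < τ ∧ ∀ t : ℝ, (∀ s : ℝ, f t ≤ f s) → t = 0 ∨ τ ≤ |t| := by
  obtain ⟨τ, hτ, h⟩ :=
    hard_thresholding_one_dim_general hg.continuousAt.lowerSemicontinuousAt hlam hf
  exact ⟨τ, hτ, fun t ht => h t (ht 0)⟩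
end

section
/- Assume the bounded-variance condition, the concave-penalty condition, and the sparse-eigenvalue condition with constants c > 0 and κ. Let β₀ ∈ B_{τ,κ} and let β̂ be a global minimizer of Q_n over B_{τ,κ}; set δ = β̂ − β₀. Then ‖δ‖₂² ≤ c⁻¹·n⁻¹‖Xδ‖₂² and n⁻¹‖Xδ‖₂² ≤ 2c₂⁻¹·(‖n⁻¹Xᵀε‖_∞ + c₃λ)·‖δ‖₁, where ‖·‖_∞ is the maximum absolute coordinate and ‖·‖₁, ‖·‖₂ are the ℓ₁ and ℓ₂ norms on ℝ^p. -/
open scoped BigOperators Classical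

/-- The number of nonzero coordinates of a vector (the `L₀` "norm"). -/
noncomputable def l0 {p : ℕ} (v : Fin p → ℝ) : ℕ :=
  (Finset.univ.filter fun j => v j ≠ 0).card

/-- The thresholded parameter space `B_{τ,κ}`: vectors with fewer than `κ/2` nonzero
coordinates, each nonzero coordinate having magnitude at least `τ`. -/
def Bset {p : ℕ} (τ : ℝ) (κ : ℕ) : Set (Fin p → ℝ) :=
  {β | 2 * l0 β < κ ∧ ∀ j, β j = 0 ∨ τ ≤ |β j|}

/-- The penalized negative log-likelihood
`Q_n(β) = −n⁻¹(yᵀXβ − Σᵢ b((Xβ)ᵢ)) + Σⱼ p_λ(|β_j|)`. -/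
noncomputable def Qn {n p : ℕ} (X : Matrix (Fin n) (Fin p) ℝ) (y : Fin n → ℝ)
    (b : ℝ → ℝ) (pen : ℝ → ℝ) (β : Fin p → ℝ) : ℝ :=
  -(1 / (n : ℝ)) * (∑ i, y i * X.mulVec β i - ∑ i, b (X.mulVec β i)) + ∑ j, pen |β j|

/- The vector `δ` has fewer than `κ` nonzero coordinates, so the sparse-eigenvalue condition applies
to it. For the second bound, compare `Q_n(β̂)` with `Q_n(β₀)`. Strong convexity of `b` bounds the
increase of the unpenalized loss from below by `n⁻¹(c₂/2 ‖Xδ‖₂² - εᵀXδ)`, because the gradient of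
that loss at `Xβ₀` is `-n⁻¹ε`. The penalty pays at most `c₃λ ‖δ‖₁` for this increase, because a
concave function on `[0, ∞)` is nowhere steeper than at `0`, where its slope is `c₃λ`. Hölder's
inequality absorbs the noise term. -/

section Convexity

lemma hasDerivAt_half_mul_sq (m t : ℝ) : HasDerivAt (fun s => m / 2 * s ^ 2) (m * t) t :=
  ((hasDerivAt_pow 2 t).const_mul (m / 2)).congr_deriv (by push_cast; ring)

variable {S : Set ℝ} {f : ℝ → ℝ} {a x y f' m : ℝ}

lemma add_mul_sub_le_of_convexOn (hf : ConvexOn ℝ S f) (hx : x ∈ S) (hy : y ∈ S)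
    (hd : HasDerivWithinAt f f' S x) : f x + f' * (y - x) ≤ f y := by
  rcases lt_trichotomy x y with hxy | rfl | hyx
  · have hslope := hf.le_slope_of_hasDerivWithinAt hx hy hxy hd
    rw [slope_def_field, le_div_iff₀ (sub_pos.2 hxy)] at hslope
    linarith
  · simp
  · have hslope := hf.slope_le_of_hasDerivWithinAt hy hx hyx hd
    rw [slope_def_field, div_le_iff₀ (sub_pos.2 hyx)] at hslope
    linarith

lemma add_mul_sub_add_sq_le_of_strongConvexOn (hf : StrongConvexOn S m f) (hx : x ∈ S) (hy : y ∈ S)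
    (hd : HasDerivWithinAt f f' S x) :
    f x + f' * (y - x) + m / 2 * (y - x) ^ 2 ≤ f y := by
  have hconv : ConvexOn ℝ S fun t => f t - m / 2 * t ^ 2 := by
    simpa only [Real.norm_eq_abs, sq_abs] using strongConvexOn_iff_convex.1 hf
  have hderiv : HasDerivWithinAt (fun t => f t - m / 2 * t ^ 2) (f' - m * x) S x :=
    hd.sub (hasDerivAt_half_mul_sq m x).hasDerivWithinAt
  have htangent := add_mul_sub_le_of_convexOn hconv hx hy hderiv
  linarith

lemma strongConvexOn_univ_of_le_deriv2 (hf : Differentiable ℝ f)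
    (hf' : Differentiable ℝ (deriv f)) (hm : ∀ t, m ≤ deriv (deriv f) t) :
    StrongConvexOn Set.univ m f := by
  rw [strongConvexOn_iff_convex]
  simp only [Real.norm_eq_abs, sq_abs]
  have hderiv (t : ℝ) : HasDerivAt (fun s => f s - m / 2 * s ^ 2) (deriv f t - m * t) t :=
    (hf t).hasDerivAt.sub (hasDerivAt_half_mul_sq m t)
  have hderiv2 (t : ℝ) : HasDerivAt (fun s => deriv f s - m * s) (deriv (deriv f) t - m) t :=
    ((hf' t).hasDerivAt.sub ((hasDerivAt_id t).const_mul m)).congr_deriv (by simp)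
  exact convexOn_of_hasDerivWithinAt2_nonneg convex_univ
    (fun t _ => (hderiv t).continuousAt.continuousWithinAt)
    (fun t _ => (hderiv t).hasDerivWithinAt) (fun t _ => (hderiv2 t).hasDerivWithinAt)
    fun t _ => sub_nonneg.2 (hm t)

lemma sub_le_mul_sub_of_concaveOn (hf : ConcaveOn ℝ S f) (ha : a ∈ S) (hx : x ∈ S) (hy : y ∈ S)
    (hax : a ≤ x) (hxy : x ≤ y) (hd : HasDerivWithinAt f f' S a) :
    f y - f x ≤ f' * (y - x) := by
  rcases hxy.eq_or_lt with rfl | hxy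
  · simp
  have hslope : (f y - f x) / (y - x) ≤ f' := by
    rcases hax.eq_or_lt with rfl | hax
    · simpa only [slope_def_field] using hf.slope_le_of_hasDerivWithinAt hx hy hxy hd
    · calc (f y - f x) / (y - x) ≤ (f x - f a) / (x - a) := hf.slope_anti_adjacent ha hy hax hxy
        _ ≤ f' := by
          simpa only [slope_def_field] using hf.slope_le_of_hasDerivWithinAt ha hx hax hd
  rwa [div_le_iff₀ (sub_pos.2 hxy)] at hslope

lemma abs_sub_le_of_monotoneOn_of_concaveOn (hmono : MonotoneOn f S) (hconc : ConcaveOn ℝ S f)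
    (ha : IsLeast S a) (hd : HasDerivWithinAt f f' S a) (hx : x ∈ S) (hy : y ∈ S) :
    |f x - f y| ≤ f' * |x - y| := by
  wlog hyx : y ≤ x generalizing x y
  · simpa only [abs_sub_comm] using this hy hx (le_of_not_ge hyx)
  rw [abs_of_nonneg (sub_nonneg.2 (hmono hy hx hyx)), abs_of_nonneg (sub_nonneg.2 hyx)]
  exact sub_le_mul_sub_of_concaveOn hconc ha.1 hy hx (ha.2 hy) hyx hd

end Convexity

lemma sum_penalty_sub_le {ι : Type*} [Fintype ι] {pen : ℝ → ℝ} {L : ℝ}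
    (hmono : MonotoneOn pen (Set.Ici 0)) (hconc : ConcaveOn ℝ (Set.Ici 0) pen)
    (hd : HasDerivWithinAt pen L (Set.Ici 0) 0) (u v : ι → ℝ) :
    ∑ j, pen |v j| - ∑ j, pen |u j| ≤ L * ∑ j, |u j - v j| := by
  have hL : 0 ≤ L :=
    hd.nonneg_of_monotoneOn (uniqueDiffOn_Ici 0 0 Set.self_mem_Ici).accPt hmono
  rw [← Finset.sum_sub_distrib, Finset.mul_sum]
  refine Finset.sum_le_sum fun j _ => ?_
  calc pen |v j| - pen |u j| ≤ |pen (|v j|) - pen (|u j|)| := le_abs_self _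
    _ ≤ L * |(|v j| - |u j|)| :=
      abs_sub_le_of_monotoneOn_of_concaveOn hmono hconc isLeast_Ici hd
        (Set.mem_Ici.2 (abs_nonneg _)) (Set.mem_Ici.2 (abs_nonneg _))
    _ ≤ L * |v j - u j| := mul_le_mul_of_nonneg_left (abs_abs_sub_abs_le_abs_sub _ _) hL
    _ = L * |u j - v j| := by rw [abs_sub_comm]

lemma dotProduct_le_iSup_abs_mul_sum_abs {ι : Type*} [Fintype ι] (u v : ι → ℝ) :
    u ⬝ᵥ v ≤ (⨆ j, |u j|) * ∑ j, |v j| := by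
  rw [dotProduct, Finset.mul_sum]
  refine Finset.sum_le_sum fun j _ => ?_
  calc u j * v j ≤ |u j| * |v j| := (le_abs_self _).trans_eq (abs_mul _ _)
    _ ≤ (⨆ k, |u k|) * |v j| :=
      mul_le_mul_of_nonneg_right (le_ciSup (f := fun k => |u k|) (Set.finite_range _).bddAbove j)
        (abs_nonneg _)

lemma mul_dotProduct_mulVec_le_iSup_abs_mul_sum_abs {ι ι' : Type*} [Fintype ι] [Fintype ι']
    (X : Matrix ι ι' ℝ) (ε : ι → ℝ) (w : ℝ) (v : ι' → ℝ) :
    w * (ε ⬝ᵥ X.mulVec v) ≤ (⨆ j, |w * ∑ i, X i j * ε i|) * ∑ j, |v j| := by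
  have hscore : w • Matrix.vecMul ε X = fun j => w * ∑ i, X i j * ε i := by
    ext j
    simp only [Pi.smul_apply, smul_eq_mul, Matrix.vecMul, dotProduct, mul_comm (ε _)]
  calc w * (ε ⬝ᵥ X.mulVec v) = (w • Matrix.vecMul ε X) ⬝ᵥ v := by
        rw [Matrix.dotProduct_mulVec, smul_dotProduct, smul_eq_mul]
    _ ≤ (⨆ j, |w * ∑ i, X i j * ε i|) * ∑ j, |v j| := by
        rw [hscore]
        exact dotProduct_le_iSup_abs_mul_sum_abs _ v

/-- The negative log-likelihood of a generalized linear model with cumulant function `b` and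
response `y`, as a function of the linear predictor `θ` (so `θ = Xβ`) and without the factor
`n⁻¹`. -/
noncomputable def glmLoss {ι : Type*} [Fintype ι] (y : ι → ℝ) (b : ℝ → ℝ) (θ : ι → ℝ) : ℝ :=
  ∑ i, (b (θ i) - y i * θ i)

lemma sum_sq_sub_dotProduct_le_glmLoss_sub {ι : Type*} [Fintype ι] {y ε θ₀ : ι → ℝ} {b : ℝ → ℝ}
    {m : ℝ} (hb : Differentiable ℝ b) (hconv : StrongConvexOn Set.univ m b)
    (hy : ∀ i, y i = deriv b (θ₀ i) + ε i) (θ : ι → ℝ) :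
    m / 2 * ∑ i, (θ - θ₀) i ^ 2 - ε ⬝ᵥ (θ - θ₀) ≤ glmLoss y b θ - glmLoss y b θ₀ := by
  rw [dotProduct, Finset.mul_sum, glmLoss, glmLoss, ← Finset.sum_sub_distrib,
    ← Finset.sum_sub_distrib]
  refine Finset.sum_le_sum fun i _ => ?_
  have htangent := add_mul_sub_add_sq_le_of_strongConvexOn hconv (Set.mem_univ (θ₀ i))
    (Set.mem_univ (θ i)) (hb _).hasDerivAt.hasDerivWithinAt
  rw [hy, Pi.sub_apply]
  linarith

lemma Qn_eq_glmLoss_add_penalty {n p : ℕ} (X : Matrix (Fin n) (Fin p) ℝ) (y : Fin n → ℝ)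
    (b pen : ℝ → ℝ) (β : Fin p → ℝ) :
    Qn X y b pen β = 1 / (n : ℝ) * glmLoss y b (X.mulVec β) + ∑ j, pen |β j| := by
  rw [Qn, glmLoss, Finset.sum_sub_distrib]
  ring

lemma l0_sub_eq_hammingDist {p : ℕ} (u v : Fin p → ℝ) : l0 (u - v) = hammingDist u v := by
  simp only [l0, hammingDist, Pi.sub_apply, sub_ne_zero]

lemma l0_sub_le {p : ℕ} (u v : Fin p → ℝ) : l0 (u - v) ≤ l0 u + l0 v := by
  simpa only [← l0_sub_eq_hammingDist, sub_zero] using hammingDist_triangle_right u v 0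

theorem basic_inequality_general {n p : ℕ} (hn : 0 < n)
    (X : Matrix (Fin n) (Fin p) ℝ) (b : ℝ → ℝ) (hb : Differentiable ℝ b)
    (β₀ : Fin p → ℝ) (ε y : Fin n → ℝ) (hy : ∀ i, y i = deriv b (X.mulVec β₀ i) + ε i)
    (m : ℝ) (hm : 0 < m) (hconv : StrongConvexOn Set.univ m b)
    (pen : ℝ → ℝ) (L : ℝ) (hmono : MonotoneOn pen (Set.Ici 0))
    (hconc : ConcaveOn ℝ (Set.Ici 0) pen) (hpend0 : HasDerivWithinAt pen L (Set.Ici 0) 0)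
    (c : ℝ) (hc : 0 < c) (κ : ℕ)
    (hse : ∀ v : Fin p → ℝ, l0 v < κ →
      c * ∑ j, (v j) ^ 2 ≤ (1 / (n : ℝ)) * ∑ i, (X.mulVec v i) ^ 2)
    (βh : Fin p → ℝ) (hsparse : l0 βh + l0 β₀ < κ)
    (hle : Qn X y b pen βh ≤ Qn X y b pen β₀) :
    (∑ j, (βh j - β₀ j) ^ 2 ≤
        c⁻¹ * ((1 / (n : ℝ)) * ∑ i, (X.mulVec (βh - β₀) i) ^ 2)) ∧
    ((1 / (n : ℝ)) * ∑ i, (X.mulVec (βh - β₀) i) ^ 2 ≤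
        2 * m⁻¹ * ((⨆ j, |(1 / (n : ℝ)) * ∑ i, X i j * ε i|) + L) *
          ∑ j, |βh j - β₀ j|) := by
  refine ⟨(le_inv_mul_iff₀ hc).2 (hse _ ((l0_sub_le βh β₀).trans_lt hsparse)), ?_⟩
  have hw : 0 < 1 / (n : ℝ) := one_div_pos.2 (Nat.cast_pos.2 hn)
  set w := 1 / (n : ℝ)
  set δ := βh - β₀
  have hloss : m / 2 * ∑ i, X.mulVec δ i ^ 2 - ε ⬝ᵥ X.mulVec δ ≤
      glmLoss y b (X.mulVec βh) - glmLoss y b (X.mulVec β₀) := by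
    simpa only [δ, Matrix.mulVec_sub] using
      sum_sq_sub_dotProduct_le_glmLoss_sub hb hconv hy (X.mulVec βh)
  have hpenalty : w * (m / 2 * ∑ i, X.mulVec δ i ^ 2 - ε ⬝ᵥ X.mulVec δ) ≤
      L * ∑ j, |βh j - β₀ j| := by
    rw [Qn_eq_glmLoss_add_penalty, Qn_eq_glmLoss_add_penalty] at hle
    calc w * (m / 2 * ∑ i, X.mulVec δ i ^ 2 - ε ⬝ᵥ X.mulVec δ)
        ≤ w * (glmLoss y b (X.mulVec βh) - glmLoss y b (X.mulVec β₀)) :=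
          mul_le_mul_of_nonneg_left hloss hw.le
      _ ≤ ∑ j, pen |β₀ j| - ∑ j, pen |βh j| := by linarith
      _ ≤ L * ∑ j, |βh j - β₀ j| := sum_penalty_sub_le hmono hconc hpend0 βh β₀
  have hnoise : w * (ε ⬝ᵥ X.mulVec δ) ≤
      (⨆ j, |w * ∑ i, X i j * ε i|) * ∑ j, |βh j - β₀ j| :=
    mul_dotProduct_mulVec_le_iSup_abs_mul_sum_abs X ε w δ
  calc w * ∑ i, X.mulVec δ i ^ 2
      = 2 * m⁻¹ * (w * (m / 2 * ∑ i, X.mulVec δ i ^ 2 - ε ⬝ᵥ X.mulVec δ) +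
          w * (ε ⬝ᵥ X.mulVec δ)) := by field_simp; ring
    _ ≤ 2 * m⁻¹ * (L * ∑ j, |βh j - β₀ j| +
          (⨆ j, |w * ∑ i, X i j * ε i|) * ∑ j, |βh j - β₀ j|) :=
        mul_le_mul_of_nonneg_left (add_le_add hpenalty hnoise) (by positivity)
    _ = 2 * m⁻¹ * ((⨆ j, |w * ∑ i, X i j * ε i|) + L) * ∑ j, |βh j - β₀ j| := by ring

/-- Lemma 1 of the paper (basic inequality): under the bounded-variance, concave-penalty
and sparse-eigenvalue conditions, for any global minimizer `β̂` of `Q_n` over `B_{τ,κ}`,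
the error `δ = β̂ − β₀` satisfies
`‖δ‖₂² ≤ c⁻¹ n⁻¹‖Xδ‖₂²` and `n⁻¹‖Xδ‖₂² ≤ 2c₂⁻¹(‖n⁻¹Xᵀε‖_∞ + c₃λ)‖δ‖₁`. -/
theorem basic_inequality {n p : ℕ} (hn : 0 < n) (hp : 0 < p)
    (X : Matrix (Fin n) (Fin p) ℝ) (b : ℝ → ℝ) (hb : ContDiff ℝ 2 b)
    (β₀ : Fin p → ℝ) (ε : Fin n → ℝ) (y : Fin n → ℝ)
    (hy : ∀ i, y i = deriv b (X.mulVec β₀ i) + ε i)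
    -- bounded-variance condition
    (c₂ : ℝ) (hc₂ : 0 < c₂) (hc₂1 : c₂ ≤ 1)
    (hvar : ∀ θ : ℝ, c₂ ≤ deriv (deriv b) θ ∧ deriv (deriv b) θ ≤ c₂⁻¹)
    -- concave-penalty condition
    (pen : ℝ → ℝ) (lam c₃ : ℝ) (hc₃ : 0 < c₃) (hlam : 0 ≤ lam)
    (hmono : MonotoneOn pen (Set.Ici 0))
    (hconc : ConcaveOn ℝ (Set.Ici 0) pen)
    (hpen0 : pen 0 = 0)
    (hpendiff : DifferentiableOn ℝ pen (Set.Ioi 0))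
    (hpend0 : HasDerivWithinAt pen (c₃ * lam) (Set.Ici 0) 0)
    -- sparse-eigenvalue (robust spark) condition
    (c : ℝ) (hc : 0 < c) (κ : ℕ)
    (hse : ∀ v : Fin p → ℝ, l0 v < κ →
      c * ∑ j, (v j) ^ 2 ≤ (1 / (n : ℝ)) * ∑ i, (X.mulVec v i) ^ 2)
    -- thresholded parameter space and global minimizer
    (τ : ℝ) (hτ : 0 < τ) (hβ₀ : β₀ ∈ Bset τ κ)
    (βh : Fin p → ℝ) (hβh : βh ∈ Bset τ κ)
    (hmin : ∀ β ∈ Bset τ κ, Qn X y b pen βh ≤ Qn X y b pen β) :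
    (∑ j, (βh j - β₀ j) ^ 2 ≤
        c⁻¹ * ((1 / (n : ℝ)) * ∑ i, (X.mulVec (βh - β₀) i) ^ 2)) ∧
    ((1 / (n : ℝ)) * ∑ i, (X.mulVec (βh - β₀) i) ^ 2 ≤
        2 * c₂⁻¹ * ((⨆ j, |(1 / (n : ℝ)) * ∑ i, X i j * ε i|) + c₃ * lam) *
          ∑ j, |βh j - β₀ j|) :=
  basic_inequality_general hn X b (hb.differentiable two_ne_zero) β₀ ε y hy c₂ hc₂
    (strongConvexOn_univ_of_le_deriv2 (hb.differentiable two_ne_zero) hb.differentiable_deriv_two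
      fun θ => (hvar θ).1)
    pen (c₃ * lam) hmono hconc hpend0 c hc κ hse βh
    (by have := hβ₀.1; have := hβh.1; omega) (hmin β₀ hβ₀)
end

section
/- Assume b : ℝ → ℝ is twice continuously differentiable with b''(θ) ≥ c₂ > 0 for all θ, assume the sparse-eigenvalue condition with constants c > 0 and κ ≥ 1, and assume the penalty p_λ : [0,∞) → ℝ is continuous and nonnegative. Then Q_n attains its minimum over the thresholded parameter space: there exists β̂ ∈ B_{τ,κ} such that Q_n(β̂) ≤ Q_n(β) for all β ∈ B_{τ,κ}. -/
open scoped BigOperators Classical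

/-
Coercivity passes from the scalar losses to `Q_n` in two steps. A sum of coercive functions of the
separate coordinates of the linear predictor `η = Xβ` is coercive in `η`, because leaving every
compact set of a finite product means leaving every compact set along some coordinate. The sparse
vectors form a finite union of coordinate subspaces, on each of which `X` is injective, hence a
closed embedding; so `Xβ` escapes to infinity when `β` does so among sparse vectors. The scalar
losses `θ ↦ b θ - yᵢ θ` are themselves coercive since a strongly convex function grows
quadratically: compare its value at `x` with those at `0` and at `x / ‖x‖`.
-/

open Filter Set Topology

section StrongConvexity

variable {E : Type*} [NormedAddCommGroup E] [NormedSpace ℝ E] {f : E → ℝ} {m : ℝ}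

lemma strongConvexOn_sub_linear {s : Set E} (hf : StrongConvexOn s m f) (ℓ : E →ₗ[ℝ] ℝ) :
    StrongConvexOn s m (fun x => f x - ℓ x) := by
  have hℓ : UniformConcaveOn s 0 ℓ := uniformConcaveOn_zero.2 (ℓ.concaveOn hf.1)
  simpa only [StrongConvexOn, add_zero] using! UniformConvexOn.sub hf hℓ

lemma strongConvexOn_univ_of_le_deriv2_s8 {g : ℝ → ℝ} (hg : Differentiable ℝ g)
    (hg' : Differentiable ℝ (deriv g)) (hm : ∀ x, m ≤ deriv (deriv g) x) :
    StrongConvexOn univ m g := by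
  have hderiv (x : ℝ) : HasDerivAt (fun x => g x - m / 2 * ‖x‖ ^ 2) (deriv g x - m * x) x := by
    simp only [Real.norm_eq_abs, sq_abs]
    refine ((hg x).hasDerivAt.sub ((hasDerivAt_pow 2 x).const_mul (m / 2))).congr_deriv ?_
    push_cast
    ring
  have hderiv2 (x : ℝ) : HasDerivAt (fun x => deriv g x - m * x) (deriv (deriv g) x - m) x := by
    simpa only [mul_one] using! (hg' x).hasDerivAt.sub ((hasDerivAt_id x).const_mul m)
  have hderiv_eq : deriv (fun x => g x - m / 2 * ‖x‖ ^ 2) = fun x => deriv g x - m * x :=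
    funext fun x => (hderiv x).deriv
  rw [strongConvexOn_iff_convex]
  refine convexOn_univ_of_deriv2_nonneg (fun x => (hderiv x).differentiableAt) ?_ fun x => ?_
  · rw [hderiv_eq]
    exact fun x => (hderiv2 x).differentiableAt
  · rw [Function.iterate_succ_apply, Function.iterate_one, hderiv_eq, (hderiv2 x).deriv]
    exact sub_nonneg.2 (hm x)

lemma le_of_strongConvexOn_of_one_le_norm {M : ℝ} (hf : StrongConvexOn univ m f)
    (hM : ∀ z, ‖z‖ = 1 → M ≤ f z) {x : E} (hx : 1 ≤ ‖x‖) :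
    f 0 + ‖x‖ * (M - f 0 + m / 2 * (‖x‖ - 1)) ≤ f x := by
  have hpos : 0 < ‖x‖ := one_pos.trans_le hx
  have hunit : M ≤ f (‖x‖⁻¹ • x) :=
    hM _ (by rw [norm_smul, norm_inv, norm_norm, inv_mul_cancel₀ hpos.ne'])
  have hsegment : f (‖x‖⁻¹ • x) ≤ ‖x‖⁻¹ * f x + (1 - ‖x‖⁻¹) * f 0
      - ‖x‖⁻¹ * (1 - ‖x‖⁻¹) * (m / 2 * ‖x‖ ^ 2) := by
    simpa only [smul_zero, add_zero, sub_zero, smul_eq_mul] using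
      hf.2 (mem_univ x) (mem_univ 0) (inv_nonneg.2 hpos.le)
        (sub_nonneg.2 (inv_le_one_of_one_le₀ hx)) (add_sub_cancel _ _)
  have hscaled := mul_le_mul_of_nonneg_left (hunit.trans hsegment) hpos.le
  field_simp at hscaled
  linarith

theorem tendsto_cocompact_atTop_of_strongConvexOn [FiniteDimensional ℝ E] (hm : 0 < m)
    (hf : StrongConvexOn univ m f) : Tendsto f (cocompact E) atTop := by
  have : ProperSpace E := FiniteDimensional.proper_real E
  have hcont : ContinuousOn f univ := (hf.strictConvexOn hm).convexOn.continuousOn isOpen_univ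
  obtain ⟨M, hM⟩ := (isCompact_sphere (0 : E) 1).bddBelow_image (hcont.mono (subset_univ _))
  have hgrowth : Tendsto (fun r : ℝ => f 0 + r * (M - f 0 + m / 2 * (r - 1))) atTop atTop :=
    tendsto_atTop_add_const_left _ _ <| tendsto_id.atTop_mul_atTop₀ <|
      tendsto_atTop_add_const_left _ _ <|
        (tendsto_atTop_add_const_right _ (-1) tendsto_id).const_mul_atTop (half_pos hm)
  have hnorm : Tendsto (‖·‖) (cocompact E) atTop := tendsto_norm_cocompact_atTop
  refine tendsto_atTop_mono' _ ?_ (hgrowth.comp hnorm)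
  filter_upwards [hnorm.eventually_ge_atTop 1] with x hx
  exact le_of_strongConvexOn_of_one_le_norm hf
    (fun z hz => hM (mem_image_of_mem f (mem_sphere_zero_iff_norm.2 hz))) hx

end StrongConvexity

section Coercivity

lemma tendsto_sum_cocompact_pi_atTop {ι : Type*} [Fintype ι] {Y : ι → Type*}
    [∀ i, TopologicalSpace (Y i)] {φ : ∀ i, Y i → ℝ} (hφ : ∀ i, Continuous (φ i))
    (hlim : ∀ i, Tendsto (φ i) (cocompact (Y i)) atTop) :
    Tendsto (fun z : ∀ i, Y i => ∑ i, φ i (z i)) (cocompact (∀ i, Y i)) atTop := by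
  have hbdd (i : ι) : ∃ m, ∀ t, m ≤ φ i t := by
    rcases isEmpty_or_nonempty (Y i) with _ | _
    · exact ⟨0, isEmptyElim⟩
    · exact ((hφ i).exists_forall_le (hlim i)).imp' (φ i) fun _ h => h
  choose m hm using hbdd
  rw [← coprodᵢ_cocompact, Filter.coprodᵢ, tendsto_iSup]
  intro i
  simp only [← Finset.add_sum_erase _ _ (Finset.mem_univ i)]
  exact tendsto_atTop_add_right_of_le _ _ ((hlim i).comp tendsto_comap)
    fun z => Finset.sum_le_sum fun k _ => hm k (z k)

lemma tendsto_inf_principal_biUnion {α β ι : Type*} {f : α → β} {l : Filter α} {l' : Filter β}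
    {I : Set ι} (hI : I.Finite) {s : ι → Set α} (h : ∀ i ∈ I, Tendsto f (l ⊓ 𝓟 (s i)) l') :
    Tendsto f (l ⊓ 𝓟 (⋃ i ∈ I, s i)) l' := by
  intro U hU
  have hall : ∀ᶠ x in l, ∀ i ∈ I, x ∈ s i → f x ∈ U :=
    (eventually_all_finite hI).2 fun i hi => eventually_inf_principal.1 (h i hi hU)
  refine eventually_inf_principal.2 (hall.mono fun x hx hxs => ?_)
  obtain ⟨i, hi, hxi⟩ := mem_iUnion₂.1 hxs
  exact hx i hi hxi

variable {F : Type*} [AddCommGroup F] [Module ℝ F] [TopologicalSpace F] [IsTopologicalAddGroup F]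
  [ContinuousSMul ℝ F] [T2Space F]

lemma tendsto_cocompact_inf_principal_submodule {E : Type*} [AddCommGroup E] [Module ℝ E]
    [TopologicalSpace E] [IsTopologicalAddGroup E] [ContinuousSMul ℝ E] [T2Space E]
    (V : Submodule ℝ E) [FiniteDimensional ℝ V] (f : E →ₗ[ℝ] F) (hf : ∀ v ∈ V, f v = 0 → v = 0) :
    Tendsto f (cocompact E ⊓ 𝓟 V) (cocompact F) := by
  have hker : LinearMap.ker (f.domRestrict V) = ⊥ :=
    LinearMap.ker_eq_bot'.2 fun v hv => Subtype.ext (hf v v.2 hv)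
  rw [← map_comap_setCoe_val, tendsto_map'_iff]
  exact (LinearMap.isClosedEmbedding_of_injective hker).tendsto_cocompact.mono_left
    (comap_cocompact_le continuous_subtype_val)

end Coercivity

section Sparsity

/-- The coordinate subspace of vectors supported in `S`. The sparse vectors form a finite union of
such subspaces. -/
def coordSubspace {ι : Type*} (S : Finset ι) : Submodule ℝ (ι → ℝ) :=
  Submodule.pi (S : Set ι)ᶜ fun _ => ⊥

lemma mem_coordSubspace {ι : Type*} {S : Finset ι} {v : ι → ℝ} :
    v ∈ coordSubspace S ↔ ∀ j, v j ≠ 0 → j ∈ S := by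
  simp only [coordSubspace, Submodule.mem_pi, mem_compl_iff, Finset.mem_coe, Submodule.mem_bot,
    not_imp_comm, ne_eq]

variable {p : ℕ}

lemma l0_lt_iff_exists_mem_coordSubspace {v : Fin p → ℝ} {k : ℕ} :
    l0 v < k ↔ ∃ S : Finset (Fin p), S.card < k ∧ v ∈ coordSubspace S := by
  constructor
  · exact fun hv => ⟨_, hv, mem_coordSubspace.2 fun j hj => by simpa using hj⟩
  · rintro ⟨S, hS, hv⟩
    exact (Finset.card_le_card fun j hj =>
      mem_coordSubspace.1 hv j (Finset.mem_filter.1 hj).2).trans_lt hS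

lemma setOf_l0_lt_eq_biUnion (k : ℕ) :
    {v : Fin p → ℝ | l0 v < k} =
      ⋃ S ∈ {S : Finset (Fin p) | S.card < k}, (coordSubspace S : Set (Fin p → ℝ)) := by
  ext v
  simp [l0_lt_iff_exists_mem_coordSubspace]

lemma isClosed_setOf_l0_lt (k : ℕ) : IsClosed {v : Fin p → ℝ | l0 v < k} := by
  rw [setOf_l0_lt_eq_biUnion]
  exact (toFinite _).isClosed_biUnion fun S _ => (coordSubspace S).closed_of_finiteDimensional

lemma tendsto_cocompact_inf_principal_l0_lt {F : Type*} [AddCommGroup F] [Module ℝ F]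
    [TopologicalSpace F] [IsTopologicalAddGroup F] [ContinuousSMul ℝ F] [T2Space F] {k : ℕ}
    (f : (Fin p → ℝ) →ₗ[ℝ] F) (hf : ∀ v, l0 v < k → f v = 0 → v = 0) :
    Tendsto f (cocompact (Fin p → ℝ) ⊓ 𝓟 {v | l0 v < k}) (cocompact F) := by
  rw [setOf_l0_lt_eq_biUnion]
  exact tendsto_inf_principal_biUnion (toFinite _) fun S hS =>
    tendsto_cocompact_inf_principal_submodule _ f fun v hv =>
      hf v (l0_lt_iff_exists_mem_coordSubspace.2 ⟨S, hS, hv⟩)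

lemma two_mul_l0_lt_iff {v : Fin p → ℝ} {κ : ℕ} : 2 * l0 v < κ ↔ l0 v < (κ + 1) / 2 := by
  omega

lemma isClosed_Bset (τ : ℝ) (κ : ℕ) : IsClosed (Bset τ κ : Set (Fin p → ℝ)) := by
  simp only [Bset, two_mul_l0_lt_iff, ofPred_and, ofPred_forall, ofPred_or]
  exact (isClosed_setOf_l0_lt _).inter <| isClosed_iInter fun j =>
    (isClosed_eq (continuous_apply j) continuous_const).union
      (isClosed_le continuous_const (continuous_apply j).abs)

lemma zero_mem_Bset (τ : ℝ) {κ : ℕ} (hκ : 1 ≤ κ) : (0 : Fin p → ℝ) ∈ Bset τ κ :=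
  ⟨by simpa [l0] using! hκ, fun _ => Or.inl rfl⟩

end Sparsity

lemma eq_zero_of_mul_sum_sq_le {ι κ : Type*} [Fintype ι] [Fintype κ] {A : Matrix ι κ ℝ} {a c : ℝ}
    (hc : 0 < c) {v : κ → ℝ} (hv : c * ∑ j, v j ^ 2 ≤ a * ∑ i, A.mulVec v i ^ 2)
    (hAv : A.mulVec v = 0) : v = 0 := by
  have hsum : ∑ j, v j ^ 2 ≤ 0 := nonpos_of_mul_nonpos_right (by simpa [hAv] using hv) hc
  have hsq := (Finset.sum_eq_zero_iff_of_nonneg fun j _ => sq_nonneg (v j)).1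
    (hsum.antisymm (Finset.sum_nonneg fun j _ => sq_nonneg (v j)))
  exact funext fun j => (pow_eq_zero_iff two_ne_zero).1 (hsq j (Finset.mem_univ j))

section PenalizedLikelihood

variable {n p : ℕ} {X : Matrix (Fin n) (Fin p) ℝ} {y : Fin n → ℝ} {b pen : ℝ → ℝ}

lemma Qn_eq_sum_loss_add_penalty (β : Fin p → ℝ) :
    Qn X y b pen β =
      1 / (n : ℝ) * ∑ i, (b (X.mulVec β i) - y i * X.mulVec β i) + ∑ j, pen |β j| := by
  rw [Qn, neg_mul, ← mul_neg, neg_sub, Finset.sum_sub_distrib]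

lemma continuous_Qn (hb : Continuous b) (hpen : ContinuousOn pen (Ici 0)) :
    Continuous (Qn X y b pen) := by
  have hpen_abs (j : Fin p) : Continuous fun β : Fin p → ℝ => pen |β j| :=
    hpen.comp_continuous (continuous_apply j).abs fun β => abs_nonneg (β j)
  have hpredictor (i : Fin n) : Continuous fun β : Fin p → ℝ => X.mulVec β i :=
    (continuous_apply i).comp X.mulVecLin.continuous_of_finiteDimensional
  have hloglik : Continuous fun β : Fin p → ℝ =>
      ∑ i, y i * X.mulVec β i - ∑ i, b (X.mulVec β i) :=
    (continuous_finsetSum _ fun i _ => (hpredictor i).const_mul (y i)).sub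
      (continuous_finsetSum _ fun i _ => hb.comp (hpredictor i))
  exact (hloglik.const_mul _).add (continuous_finsetSum _ fun j _ => hpen_abs j)

lemma tendsto_Qn_cocompact_inf_principal_l0_lt (hn : 0 < n) (hb : Continuous b)
    (hloss : ∀ i, Tendsto (fun θ => b θ - y i * θ) (cocompact ℝ) atTop) {k : ℕ}
    (hX : ∀ v, l0 v < k → X.mulVec v = 0 → v = 0) {m : ℝ} (hm : ∀ t, 0 ≤ t → m ≤ pen t) :
    Tendsto (Qn X y b pen) (cocompact (Fin p → ℝ) ⊓ 𝓟 {v | l0 v < k}) atTop := by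
  have hpredictor := tendsto_cocompact_inf_principal_l0_lt X.mulVecLin hX
  have hsum := tendsto_sum_cocompact_pi_atTop (fun i => by fun_prop) hloss
  have hinv : 0 < 1 / (n : ℝ) := one_div_pos.2 (Nat.cast_pos.2 hn)
  rw [funext Qn_eq_sum_loss_add_penalty]
  exact tendsto_atTop_add_right_of_le _ _ ((hsum.comp hpredictor).const_mul_atTop hinv)
    fun β => Finset.sum_le_sum fun j _ => hm |β j| (abs_nonneg _)

lemma tendsto_sub_mul_cocompact_atTop (hb : ContDiff ℝ 2 b) {c₂ : ℝ} (hc₂ : 0 < c₂)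
    (hvar : ∀ θ, c₂ ≤ deriv (deriv b) θ) (a : ℝ) :
    Tendsto (fun θ => b θ - a * θ) (cocompact ℝ) atTop :=
  have hconvex : StrongConvexOn univ c₂ b := strongConvexOn_univ_of_le_deriv2_s8
    (hb.differentiable two_ne_zero) ((hb.iterate_deriv' 1 1).differentiable one_ne_zero) hvar
  tendsto_cocompact_atTop_of_strongConvexOn hc₂
    (strongConvexOn_sub_linear hconvex (LinearMap.mulLeft ℝ a))

theorem global_minimizer_exists_general (hn : 0 < n) (hb : Continuous b)
    (hloss : ∀ i, Tendsto (fun θ => b θ - y i * θ) (cocompact ℝ) atTop) {κ : ℕ} (hκ : 1 ≤ κ)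
    (hX : ∀ v, 2 * l0 v < κ → X.mulVec v = 0 → v = 0) (hpenc : ContinuousOn pen (Ici 0))
    {m : ℝ} (hm : ∀ t, 0 ≤ t → m ≤ pen t) (τ : ℝ) :
    ∃ βh ∈ Bset τ κ, ∀ β ∈ Bset τ κ, Qn X y b pen βh ≤ Qn X y b pen β := by
  simp only [two_mul_l0_lt_iff] at hX
  have hsubset : Bset τ κ ⊆ {v : Fin p → ℝ | l0 v < (κ + 1) / 2} :=
    fun β hβ => two_mul_l0_lt_iff.1 hβ.1
  have hcoercive : Tendsto (Qn X y b pen) (cocompact (Fin p → ℝ) ⊓ 𝓟 (Bset τ κ)) atTop :=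
    (tendsto_Qn_cocompact_inf_principal_l0_lt hn hb hloss hX hm).mono_left
      (inf_le_inf_left _ (principal_mono.2 hsubset))
  exact (continuous_Qn hb hpenc).continuousOn.exists_isMinOn' (isClosed_Bset τ κ)
    (zero_mem_Bset τ hκ) (hcoercive.eventually_ge_atTop _)

end PenalizedLikelihood

/-- Existence part of Theorem 1: under strong convexity of `b` (`b'' ≥ c₂ > 0`), the
sparse-eigenvalue condition, and a continuous nonnegative penalty, `Q_n` attains its
minimum over the thresholded parameter space `B_{τ,κ}`. -/
theorem global_minimizer_exists {n p : ℕ} (hn : 0 < n) (hp : 0 < p)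
    (X : Matrix (Fin n) (Fin p) ℝ) (y : Fin n → ℝ)
    (b : ℝ → ℝ) (hb : ContDiff ℝ 2 b)
    (c₂ : ℝ) (hc₂ : 0 < c₂) (hvar : ∀ θ : ℝ, c₂ ≤ deriv (deriv b) θ)
    (c : ℝ) (hc : 0 < c) (κ : ℕ) (hκ : 1 ≤ κ)
    (hse : ∀ v : Fin p → ℝ, l0 v < κ →
      c * ∑ j, (v j) ^ 2 ≤ (1 / (n : ℝ)) * ∑ i, (X.mulVec v i) ^ 2)
    (pen : ℝ → ℝ) (hpenc : ContinuousOn pen (Set.Ici 0))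
    (hpennn : ∀ t : ℝ, 0 ≤ t → 0 ≤ pen t)
    (τ : ℝ) (hτ : 0 < τ) :
    ∃ βh ∈ Bset τ κ, ∀ β ∈ Bset τ κ, Qn X y b pen βh ≤ Qn X y b pen β :=
  global_minimizer_exists_general hn hb.continuous
    (fun i => tendsto_sub_mul_cocompact_atTop hb hc₂ hvar (y i)) hκ
    (fun v hv => eq_zero_of_mul_sum_sq_le hc (hse v (by omega))) hpenc hpennn τ
end

section
/- Assume b : ℝ → ℝ is twice continuously differentiable with b''(θ) ≥ c₂ > 0 for all θ, and assume the sparse-eigenvalue condition with constants c > 0 and κ. Let α₀ = supp(β₀) with s = |α₀| < κ, and suppose β* ∈ ℝ^p with supp(β*) ⊆ α₀ satisfies the first-order condition x̃_jᵀ(y − b'(Xβ*)) = 0 for every j ∈ α₀, where b' is applied componentwise and x̃_j is the j-th column of X. Then ‖β* − β₀‖₂ ≤ (c·c₂)⁻¹·‖n⁻¹X_{α₀}ᵀε‖₂ ≤ (c·c₂)⁻¹·√s·‖n⁻¹X_{α₀}ᵀε‖_∞, where X_{α₀} is the submatrix of X with columns indexed by α₀. -/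
open scoped BigOperators Classical

/-!
With `δ = β* - β₀`, strong monotonicity of `b'` gives
`c₂ ‖Xδ‖² ≤ ⟨Xδ, b'(Xβ*) - b'(Xβ₀)⟩ = ⟨Xδ, ε⟩ - ⟨Xδ, y - b'(Xβ*)⟩`. As `δ` is supported on `α₀`,
the first-order condition kills the last term, and `⟨Xδ, ε⟩` only sees `X_{α₀}ᵀε`. The
sparse-eigenvalue condition bounds `‖Xδ‖²` below by a multiple of `‖δ‖²`, and Cauchy–Schwarz
then allows one factor `‖δ‖` to be cancelled.
-/

/-- Strong monotonicity of a real function with modulus `m`; for the mean function `b'` it replaces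
the curvature bound `b'' ≥ m`. The product form is symmetric in `x` and `y`, so no case distinction
on their order is needed when it is applied coordinatewise. -/
def StronglyMonotone (m : ℝ) (f : ℝ → ℝ) : Prop :=
  ∀ x y, m * (x - y) ^ 2 ≤ (x - y) * (f x - f y)

theorem stronglyMonotone_of_le_deriv {f : ℝ → ℝ} {m : ℝ} (hf : Differentiable ℝ f)
    (hm : ∀ x, m ≤ deriv f x) : StronglyMonotone m f := by
  intro x y
  wlog hyx : y ≤ x generalizing x y
  · linarith [this y x (le_of_not_ge hyx)]
  calc m * (x - y) ^ 2 = (x - y) * (m * (x - y)) := by ring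
    _ ≤ (x - y) * (f x - f y) :=
      mul_le_mul_of_nonneg_left (mul_sub_le_image_sub_of_le_deriv hf hm hyx) (sub_nonneg.2 hyx)

theorem l0_le_card_of_support_subset {p : ℕ} {v : Fin p → ℝ} {s : Finset (Fin p)}
    (hv : Function.support v ⊆ s) : l0 v ≤ s.card :=
  Finset.card_le_card fun _ hj => hv (Finset.mem_filter.1 hj).2

section FiniteSums

variable {ι : Type*} {s : Finset ι}

theorem sqrt_sum_sq_le_inv_mul_of_mul_sum_sq_le_sum_mul {u g : ι → ℝ} {a : ℝ} (ha : 0 < a)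
    (h : a * ∑ j ∈ s, u j ^ 2 ≤ ∑ j ∈ s, u j * g j) :
    √(∑ j ∈ s, u j ^ 2) ≤ a⁻¹ * √(∑ j ∈ s, g j ^ 2) := by
  rw [le_inv_mul_iff₀ ha]
  rcases (Real.sqrt_nonneg (∑ j ∈ s, u j ^ 2)).eq_or_lt with hzero | hpos
  · simp only [← hzero, mul_zero, Real.sqrt_nonneg]
  · refine le_of_mul_le_mul_left ?_ hpos
    calc √(∑ j ∈ s, u j ^ 2) * (a * √(∑ j ∈ s, u j ^ 2))
        = a * ∑ j ∈ s, u j ^ 2 := by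
          rw [mul_left_comm, Real.mul_self_sqrt (Finset.sum_nonneg fun j _ => sq_nonneg (u j))]
      _ ≤ ∑ j ∈ s, u j * g j := h
      _ ≤ √(∑ j ∈ s, u j ^ 2) * √(∑ j ∈ s, g j ^ 2) := Real.sum_mul_le_sqrt_mul_sqrt s u g

theorem le_biSup_of_mem_finset {α : Type*} [ConditionallyCompleteLinearOrder α] {f : ι → α} {i : ι}
    (hi : i ∈ s) (hf : sSup ∅ ≤ f i) : f i ≤ ⨆ j ∈ s, f j :=
  le_of_forall_gt fun _ hlt => (s.finite_toSet.ciSup_lt_iff ⟨i, hi, hf⟩).1 hlt i hi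

theorem sqrt_sum_sq_le_sqrt_card_mul_biSup_abs (s : Finset ι) (g : ι → ℝ) :
    √(∑ j ∈ s, g j ^ 2) ≤ √(s.card : ℝ) * ⨆ j ∈ s, |g j| := by
  have hsup : 0 ≤ ⨆ j ∈ s, |g j| :=
    Real.iSup_nonneg fun j => Real.iSup_nonneg fun _ => abs_nonneg (g j)
  have habs : ∀ j ∈ s, |g j| ≤ ⨆ k ∈ s, |g k| := fun j hj =>
    le_biSup_of_mem_finset (f := fun k => |g k|) hj (Real.sSup_empty.trans_le (abs_nonneg (g j)))
  have hsq : ∀ j ∈ s, g j ^ 2 ≤ (⨆ k ∈ s, |g k|) ^ 2 := fun j hj =>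
    sq_le_sq.2 ((habs j hj).trans (le_abs_self _))
  calc √(∑ j ∈ s, g j ^ 2) ≤ √(s.card * (⨆ j ∈ s, |g j|) ^ 2) :=
        Real.sqrt_le_sqrt <| (Finset.sum_le_card_nsmul s _ _ hsq).trans_eq (nsmul_eq_mul _ _)
    _ = √(s.card : ℝ) * ⨆ j ∈ s, |g j| := by
        rw [Real.sqrt_mul (Nat.cast_nonneg _), Real.sqrt_sq hsup]

end FiniteSums

section Design

variable {ι η : Type*} [Fintype ι] [Fintype η] {s : Finset η}

theorem mulVec_dotProduct_of_support_subset {R : Type*} [CommSemiring R] (X : Matrix ι η R)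
    {v : η → R} (hv : Function.support v ⊆ s) (w : ι → R) :
    X.mulVec v ⬝ᵥ w = ∑ j ∈ s, v j * ∑ i, X i j * w i := by
  calc X.mulVec v ⬝ᵥ w = v ⬝ᵥ X.transpose.mulVec w := by
        rw [Matrix.dotProduct_mulVec, Matrix.vecMul_transpose]
    _ = ∑ j ∈ s, v j * ∑ i, X i j * w i := by
        refine (Finset.sum_subset s.subset_univ fun j _ hj => ?_).symm
        rw [Function.notMem_support.1 fun h => hj (hv h), zero_mul]

theorem StronglyMonotone.mul_sum_sq_mulVec_sub_le {f : ℝ → ℝ} {m : ℝ} (hf : StronglyMonotone m f)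
    (X : Matrix ι η ℝ) {β β₀ : η → ℝ} (hδ : Function.support (β - β₀) ⊆ s) {ε y : ι → ℝ}
    (hy : ∀ i, y i = f (X.mulVec β₀ i) + ε i)
    (hfoc : ∀ j ∈ s, ∑ i, X i j * (y i - f (X.mulVec β i)) = 0) :
    m * ∑ i, X.mulVec (β - β₀) i ^ 2 ≤ ∑ j ∈ s, (β j - β₀ j) * ∑ i, X i j * ε i := by
  have hresidual : ∑ i, X.mulVec (β - β₀) i * (y i - f (X.mulVec β i)) = 0 :=
    (mulVec_dotProduct_of_support_subset X hδ _).trans <|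
      Finset.sum_eq_zero fun j hj => by rw [hfoc j hj, mul_zero]
  calc m * ∑ i, X.mulVec (β - β₀) i ^ 2
      ≤ ∑ i, X.mulVec (β - β₀) i * (f (X.mulVec β i) - f (X.mulVec β₀ i)) := by
        rw [Finset.mul_sum, Matrix.mulVec_sub]
        exact Finset.sum_le_sum fun i _ => hf _ _
    _ = ∑ i, X.mulVec (β - β₀) i * ε i
          - ∑ i, X.mulVec (β - β₀) i * (y i - f (X.mulVec β i)) := by
        rw [← Finset.sum_sub_distrib]
        exact Finset.sum_congr rfl fun i _ => by rw [hy]; ring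
    _ = ∑ j ∈ s, (β j - β₀ j) * ∑ i, X i j * ε i := by
        rw [hresidual, sub_zero]
        exact mulVec_dotProduct_of_support_subset X hδ ε

/-- In the paper, `f` is the mean function `b'` and `r` the normalisation `1 / n`. -/
theorem oracle_mle_bound_general (X : Matrix ι η ℝ) {f : ℝ → ℝ} {m : ℝ} (hm : 0 < m)
    (hf : StronglyMonotone m f) {c r : ℝ} (hc : 0 < c) (hr : 0 ≤ r)
    (hX : ∀ v : η → ℝ, Function.support v ⊆ s →
      c * ∑ j, v j ^ 2 ≤ r * ∑ i, X.mulVec v i ^ 2)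
    {β β₀ : η → ℝ} (hβ : Function.support β ⊆ s) (hβ₀ : Function.support β₀ ⊆ s)
    {ε y : ι → ℝ} (hy : ∀ i, y i = f (X.mulVec β₀ i) + ε i)
    (hfoc : ∀ j ∈ s, ∑ i, X i j * (y i - f (X.mulVec β i)) = 0) :
    √(∑ j, (β j - β₀ j) ^ 2) ≤ (c * m)⁻¹ * √(∑ j ∈ s, (r * ∑ i, X i j * ε i) ^ 2) ∧
    (c * m)⁻¹ * √(∑ j ∈ s, (r * ∑ i, X i j * ε i) ^ 2) ≤
      (c * m)⁻¹ * √(s.card : ℝ) * ⨆ j ∈ s, |r * ∑ i, X i j * ε i| := by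
  have hcm : 0 < c * m := mul_pos hc hm
  have hδ : Function.support (β - β₀) ⊆ s :=
    (Function.support_sub β β₀).trans (Set.union_subset hβ hβ₀)
  have hsum : ∑ j, (β j - β₀ j) ^ 2 = ∑ j ∈ s, (β j - β₀ j) ^ 2 :=
    (Finset.sum_subset s.subset_univ fun j _ hj => by
      rw [← Pi.sub_apply, Function.notMem_support.1 fun h => hj (hδ h), sq, zero_mul]).symm
  refine ⟨?_, ?_⟩
  · rw [hsum]
    refine sqrt_sum_sq_le_inv_mul_of_mul_sum_sq_le_sum_mul hcm ?_
    calc c * m * ∑ j ∈ s, (β j - β₀ j) ^ 2 = m * (c * ∑ j, (β - β₀) j ^ 2) := by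
          simp only [Pi.sub_apply, hsum]; ring
      _ ≤ m * (r * ∑ i, X.mulVec (β - β₀) i ^ 2) := mul_le_mul_of_nonneg_left (hX _ hδ) hm.le
      _ = r * (m * ∑ i, X.mulVec (β - β₀) i ^ 2) := mul_left_comm _ _ _
      _ ≤ r * ∑ j ∈ s, (β j - β₀ j) * ∑ i, X i j * ε i :=
          mul_le_mul_of_nonneg_left (hf.mul_sum_sq_mulVec_sub_le X hδ hy hfoc) hr
      _ = ∑ j ∈ s, (β j - β₀ j) * (r * ∑ i, X i j * ε i) := by
          simp only [Finset.mul_sum, mul_left_comm]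
  · rw [mul_assoc]
    exact mul_le_mul_of_nonneg_left (sqrt_sum_sq_le_sqrt_card_mul_biSup_abs s _) (inv_pos.2 hcm).le

end Design

/-- Deterministic bound (e064)/(e079) for the oracle-assisted maximum likelihood
estimator: under `b'' ≥ c₂ > 0` and the sparse-eigenvalue condition, any `β*` supported
on the true support `α₀` (with `s = |α₀| < κ`) satisfying the first-order condition
`x̃_jᵀ(y − b'(Xβ*)) = 0` for all `j ∈ α₀` obeys
`‖β* − β₀‖₂ ≤ (c·c₂)⁻¹‖n⁻¹X_{α₀}ᵀε‖₂ ≤ (c·c₂)⁻¹ √s ‖n⁻¹X_{α₀}ᵀε‖_∞`. -/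
theorem oracle_mle_bound {n p : ℕ} (hn : 0 < n) (hp : 0 < p)
    (X : Matrix (Fin n) (Fin p) ℝ)
    (b : ℝ → ℝ) (hb : ContDiff ℝ 2 b)
    (c₂ : ℝ) (hc₂ : 0 < c₂) (hvar : ∀ θ : ℝ, c₂ ≤ deriv (deriv b) θ)
    (c : ℝ) (hc : 0 < c) (κ : ℕ)
    (hse : ∀ v : Fin p → ℝ, l0 v < κ →
      c * ∑ j, (v j) ^ 2 ≤ (1 / (n : ℝ)) * ∑ i, (X.mulVec v i) ^ 2)
    (β₀ : Fin p → ℝ) (ε : Fin n → ℝ) (y : Fin n → ℝ)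
    (hy : ∀ i, y i = deriv b (X.mulVec β₀ i) + ε i)
    (α₀ : Finset (Fin p)) (hα₀ : ∀ j, j ∈ α₀ ↔ β₀ j ≠ 0)
    (s : ℕ) (hs : s = α₀.card) (hsκ : s < κ)
    (βstar : Fin p → ℝ) (hsupp : ∀ j, βstar j ≠ 0 → j ∈ α₀)
    (hfoc : ∀ j ∈ α₀, ∑ i, X i j * (y i - deriv b (X.mulVec βstar i)) = 0) :
    Real.sqrt (∑ j, (βstar j - β₀ j) ^ 2) ≤
        (c * c₂)⁻¹ * Real.sqrt (∑ j ∈ α₀, ((1 / (n : ℝ)) * ∑ i, X i j * ε i) ^ 2) ∧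
    (c * c₂)⁻¹ * Real.sqrt (∑ j ∈ α₀, ((1 / (n : ℝ)) * ∑ i, X i j * ε i) ^ 2) ≤
        (c * c₂)⁻¹ * Real.sqrt (s : ℝ) *
          ⨆ j ∈ α₀, |(1 / (n : ℝ)) * ∑ i, X i j * ε i| := by
  subst hs
  have hmean : StronglyMonotone c₂ (deriv b) :=
    stronglyMonotone_of_le_deriv hb.differentiable_deriv_two hvar
  exact oracle_mle_bound_general X hc₂ hmean hc (by positivity)
    (fun v hv => hse v ((l0_le_card_of_support_subset hv).trans_lt hsκ))
    hsupp (fun j => (hα₀ j).2) hy hfoc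
end

section
/- Assume the bounded-variance condition (c₂ ≤ b'' ≤ c₂⁻¹, c₂ ∈ (0,1]) and the sparse-eigenvalue condition with constants c > 0 and κ. Let α₀ = supp(β₀) with |α₀| = s < κ, and suppose β̂ ∈ ℝ^p satisfies: supp(β̂) = α₀; |β̂_j| ≥ τ for every j ∈ α₀ (τ > 0); and the stationarity equations n⁻¹·x̃_jᵀ(y − b'(Xβ̂)) = p_λ'(|β̂_j|)·sgn(β̂_j) for every j ∈ α₀, where p_λ satisfies the concave-penalty condition. Define γ* as the supremum, over all n×n diagonal matrices D with diagonal entries in [c₂, c₂⁻¹], of the ℓ∞ operator norm ‖(n⁻¹X_{α₀}ᵀD X_{α₀})⁻¹‖_∞ (each such matrix being invertible under the stated conditions). Then ‖β̂ − β₀‖_∞ ≤ γ*·(‖n⁻¹X_{α₀}ᵀε‖_∞ + p_λ'(τ)). -/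
open scoped BigOperators Classical Matrix

/-!
Since `β̂` and `β₀` agree off `α₀`, the mean value theorem writes
`n⁻¹X_{α₀}ᵀ(b'(Xβ̂) − b'(Xβ₀))` as `n⁻¹X_{α₀}ᵀDX_{α₀}(β̂ − β₀)_{α₀}`, where the entries of the
diagonal matrix `D` are values of `b''` and hence lie in `[c₂, c₂⁻¹]`. By the stationarity
equations the left-hand side is `n⁻¹X_{α₀}ᵀε` minus the penalty gradient, whose entries are at most
`p_λ'(τ)` in absolute value because `p_λ'` is nonnegative and decreasing. The sparse-eigenvalue
condition makes the columns `x̃_j`, `j ∈ α₀`, linearly independent, hence every weighted Gram matrix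
positive definite, so the difference `(β̂ − β₀)_{α₀}` is recovered by inversion at the cost of a
factor `γ*`; this supremum is finite because the weights `D` range over a compact set on which
inversion is continuous.
-/

open Function Set

section Restriction

variable {ι : Type*}

theorem norm_restrict_eq_biSup {E : Type*} [SeminormedAddCommGroup E] (s : Finset ι) (f : ι → E) :
    ‖s.restrict f‖ = ⨆ j ∈ s, ‖f j‖ := by
  rw [Pi.norm_def, Finset.sup_univ_eq_ciSup, NNReal.coe_iSup]
  refine ciSup_subtype (p := (· ∈ s)) (f := fun j => ‖f j‖) (finite_range _).bddAbove ?_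
  exact Real.sSup_empty.trans_le (Real.iSup_nonneg fun _ => norm_nonneg _)

variable [Fintype ι] {s : Finset ι}

theorem norm_le_norm_restrict {E : Type*} [SeminormedAddCommGroup E] {v : ι → E}
    (hv : ∀ j ∉ s, v j = 0) : ‖v‖ ≤ ‖s.restrict v‖ := by
  refine (pi_norm_le_iff_of_nonneg (norm_nonneg _)).2 fun j => ?_
  by_cases hj : j ∈ s
  · exact norm_le_pi_norm (s.restrict v) ⟨j, hj⟩
  · simp [hv j hj]

theorem submatrix_mulVec_restrict {m R : Type*} [NonUnitalNonAssocSemiring R] (X : Matrix m ι R)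
    {v : ι → R} (hv : ∀ j ∉ s, v j = 0) :
    X.submatrix id ((↑) : s → ι) *ᵥ s.restrict v = X *ᵥ v := by
  ext i
  calc ∑ j : s, X i j * v j = ∑ j ∈ s, X i j * v j := Finset.sum_coe_sort s fun j => X i j * v j
    _ = ∑ j, X i j * v j := Finset.sum_subset (Finset.subset_univ s) fun j _ hj => by simp [hv j hj]

end Restriction

section WeightedGram

variable {m n : Type*} [Fintype m] [DecidableEq m]

/-- The weighted Gram matrix `r XᵀDX` with `D = diagonal d`; the scalar `r` stands for the paper's
normalization `n⁻¹`. -/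
def weightedGram (r : ℝ) (X : Matrix m n ℝ) (d : m → ℝ) : Matrix n n ℝ :=
  r • (Xᵀ * Matrix.diagonal d * X)

theorem continuous_weightedGram (r : ℝ) (X : Matrix m n ℝ) : Continuous (weightedGram r X) := by
  unfold weightedGram
  fun_prop

variable [Fintype n]

theorem weightedGram_mulVec (r : ℝ) (X : Matrix m n ℝ) (d : m → ℝ) (v : n → ℝ) :
    weightedGram r X d *ᵥ v = r • Xᵀ *ᵥ (d * X *ᵥ v) := by
  rw [weightedGram, Matrix.smul_mulVec, ← Matrix.mulVec_mulVec, ← Matrix.mulVec_mulVec]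
  congr 2
  ext i
  exact Matrix.mulVec_diagonal d _ i

theorem posDef_weightedGram {r : ℝ} {X : Matrix m n ℝ} {d : m → ℝ} (hr : 0 < r)
    (hX : Injective X.mulVec) (hd : ∀ i, 0 < d i) : (weightedGram r X d).PosDef :=
  ((Matrix.PosDef.diagonal hd).conjTranspose_mul_mul_same hX).smul hr

end WeightedGram

section GammaStar

open scoped Matrix.Norms.Operator

theorem linfty_opNorm_eq_iSup {m n E : Type*} [Fintype m] [Fintype n] [SeminormedAddCommGroup E]
    (A : Matrix m n E) : ‖A‖ = ⨆ i, ∑ j, ‖A i j‖ := by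
  rw [Matrix.linfty_opNorm_def, Finset.sup_univ_eq_ciSup, NNReal.coe_iSup]
  simp only [NNReal.coe_sum, coe_nnnorm]

variable {m n : Type*} [Fintype m] [DecidableEq m] [Fintype n] [DecidableEq n]

/-- The paper's `γ*`: the supremum of the `ℓ∞` operator norms of the inverse weighted Gram matrices
whose weights all lie in `[l, u]`. As `sSup` and `⁻¹` have junk values, it is meaningful only when
these matrices are invertible. -/
noncomputable def gammaStar (r : ℝ) (X : Matrix m n ℝ) (l u : ℝ) : ℝ :=
  sSup ((fun d => ‖(weightedGram r X d)⁻¹‖) '' Icc (const m l) (const m u))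

theorem gammaStar_eq_sSup_iSup_sum_abs (r : ℝ) (X : Matrix m n ℝ) (l u : ℝ) :
    gammaStar r X l u = sSup {x | ∃ d : m → ℝ, (∀ i, l ≤ d i ∧ d i ≤ u) ∧
      x = ⨆ j, ∑ k, |(weightedGram r X d)⁻¹ j k|} := by
  simp only [gammaStar, image, linfty_opNorm_eq_iSup, Real.norm_eq_abs, mem_Icc, Pi.le_def,
    const_apply, ← forall_and, eq_comm]

theorem gammaStar_nonneg (r : ℝ) (X : Matrix m n ℝ) (l u : ℝ) : 0 ≤ gammaStar r X l u :=
  Real.sSup_nonneg <| forall_mem_image.2 fun _ _ => norm_nonneg _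

variable {r l u : ℝ} {X : Matrix m n ℝ} {d : m → ℝ}

theorem norm_inv_weightedGram_le_gammaStar (hr : 0 < r) (hX : Injective X.mulVec) (hl : 0 < l)
    (hd : d ∈ Icc (const m l) (const m u)) : ‖(weightedGram r X d)⁻¹‖ ≤ gammaStar r X l u := by
  refine le_csSup (isCompact_Icc.bddAbove_image fun e he => ?_) (mem_image_of_mem _ hd)
  have hdet : (weightedGram r X e).det ≠ 0 :=
    (posDef_weightedGram hr hX fun i => hl.trans_le (he.1 i)).det_pos.ne'
  have hinv : ContinuousAt Inv.inv (weightedGram r X e) :=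
    continuousAt_matrix_inv _ (by simpa only [Ring.inverse_eq_inv'] using continuousAt_inv₀ hdet)
  exact (hinv.comp (continuous_weightedGram r X).continuousAt).norm.continuousWithinAt

theorem norm_le_gammaStar_mul_norm_weightedGram_mulVec (hr : 0 < r) (hX : Injective X.mulVec)
    (hl : 0 < l) (hd : d ∈ Icc (const m l) (const m u)) (v : n → ℝ) :
    ‖v‖ ≤ gammaStar r X l u * ‖weightedGram r X d *ᵥ v‖ := by
  have hdet : IsUnit (weightedGram r X d).det :=
    (posDef_weightedGram hr hX fun i => hl.trans_le (hd.1 i)).det_pos.ne'.isUnit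
  calc ‖v‖ = ‖(weightedGram r X d)⁻¹ *ᵥ (weightedGram r X d *ᵥ v)‖ := by
        rw [Matrix.mulVec_mulVec, Matrix.nonsing_inv_mul _ hdet, Matrix.one_mulVec]
    _ ≤ ‖(weightedGram r X d)⁻¹‖ * ‖weightedGram r X d *ᵥ v‖ := Matrix.linfty_opNorm_mulVec _ _
    _ ≤ gammaStar r X l u * ‖weightedGram r X d *ᵥ v‖ := by
        gcongr
        exact norm_inv_weightedGram_le_gammaStar hr hX hl hd

end GammaStar

section Link

theorem exists_sub_eq_deriv_mul_sub {f f' : ℝ → ℝ} (hf : ∀ t, HasDerivAt f (f' t) t) (x z : ℝ) :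
    ∃ ξ, f z - f x = f' ξ * (z - x) := by
  obtain ⟨ξ, -, hξ⟩ := domain_mvt (fun t _ => (hf t).hasFDerivAt.hasFDerivWithinAt)
    convex_univ (mem_univ x) (mem_univ z)
  exact ⟨ξ, by simpa [mul_comm] using hξ⟩

variable {m n : Type*} [Fintype m] [DecidableEq m] [Fintype n] [DecidableEq n]

theorem norm_le_gammaStar_mul_norm_link_sub {r l u : ℝ} {X : Matrix m n ℝ} {f f' : ℝ → ℝ}
    (hr : 0 < r) (hX : Injective X.mulVec) (hl : 0 < l) (hf : ∀ t, HasDerivAt f (f' t) t)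
    (hf' : ∀ t, f' t ∈ Icc l u) {v : n → ℝ} {x z : m → ℝ} (hv : X *ᵥ v = z - x) :
    ‖v‖ ≤ gammaStar r X l u * ‖r • Xᵀ *ᵥ (f ∘ z - f ∘ x)‖ := by
  choose ξ hξ using fun i => exists_sub_eq_deriv_mul_sub hf (x i) (z i)
  have hgram : weightedGram r X (f' ∘ ξ) *ᵥ v = r • Xᵀ *ᵥ (f ∘ z - f ∘ x) := by
    rw [weightedGram_mulVec, hv, show f ∘ z - f ∘ x = f' ∘ ξ * (z - x) from funext hξ]
  rw [← hgram]
  exact norm_le_gammaStar_mul_norm_weightedGram_mulVec hr hX hl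
    ⟨fun i => (hf' (ξ i)).1, fun i => (hf' (ξ i)).2⟩ v

end Link

section Penalty

theorem deriv_nonneg_of_monotoneOn {f : ℝ → ℝ} {s : Set ℝ} {t : ℝ} (hf : MonotoneOn f s)
    (hs : s ∈ nhds t) : 0 ≤ deriv f t := by
  rw [← derivWithin_of_mem_nhds hs]
  exact hf.derivWithin_nonneg

theorem abs_real_sign_le_one (x : ℝ) : |Real.sign x| ≤ 1 := by
  rcases Real.sign_apply_eq x with h | h | h <;> simp [h]

theorem abs_deriv_abs_mul_sign_le {pen : ℝ → ℝ} {τ x : ℝ} (hmono : MonotoneOn pen (Ioi 0))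
    (hconc : ConcaveOn ℝ (Ioi 0) pen) (hdiff : DifferentiableOn ℝ pen (Ioi 0)) (hτ : 0 < τ)
    (hx : τ ≤ |x|) : |deriv pen |x| * Real.sign x| ≤ deriv pen τ := by
  have hx0 : 0 < |x| := hτ.trans_le hx
  have hnonneg : 0 ≤ deriv pen |x| := deriv_nonneg_of_monotoneOn hmono (Ioi_mem_nhds hx0)
  have hanti : AntitoneOn (deriv pen) (Ioi 0) :=
    hconc.antitoneOn_deriv fun t ht => hdiff.differentiableAt (Ioi_mem_nhds ht)
  calc |deriv pen |x| * Real.sign x| = deriv pen |x| * |Real.sign x| := by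
        rw [abs_mul, abs_of_nonneg hnonneg]
    _ ≤ deriv pen |x| := mul_le_of_le_one_right hnonneg (abs_real_sign_le_one x)
    _ ≤ deriv pen τ := hanti hτ hx0 hx

end Penalty

section SparseEigenvalue

variable {p : ℕ}

theorem l0_le_card {v : Fin p → ℝ} {s : Finset (Fin p)} (hv : ∀ j ∉ s, v j = 0) :
    l0 v ≤ s.card :=
  Finset.card_le_card fun j hj => by_contra fun hjs => (Finset.mem_filter.1 hj).2 (hv j hjs)

theorem linearIndepOn_col_of_forall_l0_lt {m : Type*} {X : Matrix m (Fin p) ℝ} {κ : ℕ}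
    (hX : ∀ v, l0 v < κ → X *ᵥ v = 0 → v = 0) {s : Finset (Fin p)} (hs : s.card < κ) :
    LinearIndepOn ℝ X.col s := by
  refine linearIndepOn_finset_iff.2 fun g hg j hj => ?_
  set v : Fin p → ℝ := fun j => if j ∈ s then g j else 0 with hv
  have hl0 : l0 v < κ := (l0_le_card fun j hj => if_neg hj).trans_lt hs
  have hXv : X *ᵥ v = 0 := by
    calc X *ᵥ v = ∑ j, if j ∈ s then g j • X.col j else 0 := by
          simp only [Matrix.mulVec_eq_sum, hv, op_smul_eq_smul, ite_smul, zero_smul]; rfl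
      _ = ∑ j ∈ s, g j • X.col j := by simp only [Finset.sum_ite_mem, Finset.univ_inter]
      _ = 0 := hg
  simpa [hv, hj] using congrFun (hX v hl0 hXv) j

theorem eq_zero_of_mulVec_eq_zero_of_sum_sq_le {m n : Type*} [Fintype m] [Fintype n]
    {X : Matrix m n ℝ} {v : n → ℝ} {c r : ℝ} (hc : 0 < c)
    (hle : c * ∑ j, v j ^ 2 ≤ r * ∑ i, (X *ᵥ v) i ^ 2) (hXv : X *ᵥ v = 0) : v = 0 := by
  have hsum : ∑ j, v j ^ 2 ≤ 0 := nonpos_of_mul_nonpos_right (by simpa [hXv] using hle) hc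
  have hzero := (Finset.sum_eq_zero_iff_of_nonneg fun j _ => sq_nonneg (v j)).1
    (hsum.antisymm (Finset.sum_nonneg fun j _ => sq_nonneg (v j)))
  exact funext fun j => pow_eq_zero_iff two_ne_zero |>.1 (hzero j (Finset.mem_univ j))

end SparseEigenvalue

theorem linf_estimation_bound_general {m ι : Type*} [Fintype m] [DecidableEq m] [Fintype ι]
    [DecidableEq ι] (X : Matrix m ι ℝ) (α : Finset ι) (hX : LinearIndepOn ℝ X.col α)
    {r : ℝ} (hr : 0 < r) {μ μ' : ℝ → ℝ} (hμ : ∀ θ, HasDerivAt μ (μ' θ) θ)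
    {l u : ℝ} (hl : 0 < l) (hμ' : ∀ θ, μ' θ ∈ Icc l u)
    {β₀ βh : ι → ℝ} {ε y : m → ℝ} (hy : y = μ ∘ (X *ᵥ β₀) + ε)
    {pen : ℝ → ℝ} (hmono : MonotoneOn pen (Ioi 0)) (hconc : ConcaveOn ℝ (Ioi 0) pen)
    (hdiff : DifferentiableOn ℝ pen (Ioi 0))
    (hoff : ∀ j ∉ α, βh j = β₀ j) {τ : ℝ} (hτ : 0 < τ) (hthresh : ∀ j ∈ α, τ ≤ |βh j|)
    (hstat : ∀ j ∈ α,
      (r • Xᵀ *ᵥ (y - μ ∘ (X *ᵥ βh))) j = deriv pen |βh j| * Real.sign (βh j)) :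
    ‖βh - β₀‖ ≤ gammaStar r (X.submatrix id ((↑) : α → ι)) l u *
      (‖α.restrict (r • Xᵀ *ᵥ ε)‖ + deriv pen τ) := by
  have hsupp : ∀ j ∉ α, (βh - β₀) j = 0 := fun j hj => sub_eq_zero.2 (hoff j hj)
  have hinj : Injective (X.submatrix id ((↑) : α → ι)).mulVec := Matrix.mulVec_injective_iff.2 hX
  have hsub : X.submatrix id ((↑) : α → ι) *ᵥ α.restrict (βh - β₀) = X *ᵥ βh - X *ᵥ β₀ := by
    rw [submatrix_mulVec_restrict X hsupp, Matrix.mulVec_sub]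
  have hscore : α.restrict (r • Xᵀ *ᵥ (μ ∘ (X *ᵥ βh) - μ ∘ (X *ᵥ β₀))) =
      α.restrict (r • Xᵀ *ᵥ ε) - α.restrict (r • Xᵀ *ᵥ (y - μ ∘ (X *ᵥ βh))) := by
    have hnoise : μ ∘ (X *ᵥ βh) - μ ∘ (X *ᵥ β₀) = ε - (y - μ ∘ (X *ᵥ βh)) := by rw [hy]; abel
    rw [hnoise, Matrix.mulVec_sub, smul_sub]
    rfl
  have hpen : ‖α.restrict (r • Xᵀ *ᵥ (y - μ ∘ (X *ᵥ βh)))‖ ≤ deriv pen τ := by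
    refine (pi_norm_le_iff_of_nonneg (deriv_nonneg_of_monotoneOn hmono (Ioi_mem_nhds hτ))).2
      fun j => ?_
    rw [Finset.restrict, hstat j j.2]
    exact abs_deriv_abs_mul_sign_le hmono hconc hdiff hτ (hthresh j j.2)
  calc ‖βh - β₀‖ ≤ ‖α.restrict (βh - β₀)‖ := norm_le_norm_restrict hsupp
    _ ≤ gammaStar r (X.submatrix id ((↑) : α → ι)) l u *
          ‖α.restrict (r • Xᵀ *ᵥ (μ ∘ (X *ᵥ βh) - μ ∘ (X *ᵥ β₀)))‖ :=
        norm_le_gammaStar_mul_norm_link_sub hr hinj hl hμ hμ' hsub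
    _ ≤ gammaStar r (X.submatrix id ((↑) : α → ι)) l u *
          (‖α.restrict (r • Xᵀ *ᵥ ε)‖ + deriv pen τ) := by
        refine mul_le_mul_of_nonneg_left ?_ (gammaStar_nonneg _ _ _ _)
        rw [hscore]
        exact (norm_sub_le _ _).trans (add_le_add_right hpen _)

/-- Deterministic core ((e048), (e008), (e009)) of the `L∞`-estimation bound in
Theorem 2(b): if `β̂` has the true support `α₀`, all its nonzero coordinates have
magnitude at least `τ`, and it satisfies the stationarity equations
`n⁻¹x̃_jᵀ(y − b'(Xβ̂)) = p_λ'(|β̂_j|)·sgn(β̂_j)` on `α₀`, then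
`‖β̂ − β₀‖_∞ ≤ γ*·(‖n⁻¹X_{α₀}ᵀε‖_∞ + p_λ'(τ))`, where `γ*` is the supremum of the
`ℓ∞` operator norms `‖(n⁻¹X_{α₀}ᵀDX_{α₀})⁻¹‖_∞` over diagonal matrices `D` with
diagonal entries in `[c₂, c₂⁻¹]`. -/
theorem linf_estimation_bound {n p : ℕ} (hn : 0 < n) (hp : 0 < p)
    (X : Matrix (Fin n) (Fin p) ℝ)
    (b : ℝ → ℝ) (hb : ContDiff ℝ 2 b)
    (β₀ : Fin p → ℝ) (ε : Fin n → ℝ) (y : Fin n → ℝ)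
    (hy : ∀ i, y i = deriv b (X.mulVec β₀ i) + ε i)
    -- bounded-variance condition
    (c₂ : ℝ) (hc₂ : 0 < c₂) (hc₂1 : c₂ ≤ 1)
    (hvar : ∀ θ : ℝ, c₂ ≤ deriv (deriv b) θ ∧ deriv (deriv b) θ ≤ c₂⁻¹)
    -- sparse-eigenvalue (robust spark) condition
    (c : ℝ) (hc : 0 < c) (κ : ℕ)
    (hse : ∀ v : Fin p → ℝ, l0 v < κ →
      c * ∑ j, (v j) ^ 2 ≤ (1 / (n : ℝ)) * ∑ i, (X.mulVec v i) ^ 2)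
    -- concave-penalty condition
    (pen : ℝ → ℝ) (lam c₃ : ℝ) (hc₃ : 0 < c₃) (hlam : 0 ≤ lam)
    (hmono : MonotoneOn pen (Set.Ici 0))
    (hconc : ConcaveOn ℝ (Set.Ici 0) pen)
    (hpen0 : pen 0 = 0)
    (hpendiff : DifferentiableOn ℝ pen (Set.Ioi 0))
    (hpend0 : HasDerivWithinAt pen (c₃ * lam) (Set.Ici 0) 0)
    -- support and threshold assumptions on `β̂`
    (α₀ : Finset (Fin p)) (hα₀ : ∀ j, j ∈ α₀ ↔ β₀ j ≠ 0)
    (hcard : α₀.card < κ)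
    (βh : Fin p → ℝ) (hsupp : ∀ j, βh j ≠ 0 ↔ j ∈ α₀)
    (τ : ℝ) (hτ : 0 < τ) (hthresh : ∀ j ∈ α₀, τ ≤ |βh j|)
    -- stationarity equations on the true support
    (hstat : ∀ j ∈ α₀,
      (1 / (n : ℝ)) * ∑ i, X i j * (y i - deriv b (X.mulVec βh i)) =
        deriv pen |βh j| * Real.sign (βh j))
    -- the constant `γ*`
    (γstar : ℝ)
    (hγ : γstar = sSup {x : ℝ | ∃ d : Fin n → ℝ,
      (∀ i, c₂ ≤ d i ∧ d i ≤ c₂⁻¹) ∧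
      x = ⨆ j : ↥α₀, ∑ k : ↥α₀,
        abs ((((1 / (n : ℝ)) •
            ((X.submatrix id (fun t : ↥α₀ => (t : Fin p)))ᵀ * Matrix.diagonal d *
              X.submatrix id (fun t : ↥α₀ => (t : Fin p))))⁻¹) j k)}) :
    ∀ j, |βh j - β₀ j| ≤
      γstar * ((⨆ j ∈ α₀, |(1 / (n : ℝ)) * ∑ i, X i j * ε i|) + deriv pen τ) := by
  intro j
  have hX : LinearIndepOn ℝ X.col α₀ := linearIndepOn_col_of_forall_l0_lt
    (fun v hv => eq_zero_of_mulVec_eq_zero_of_sum_sq_le hc (hse v hv)) hcard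
  have hlink : ∀ θ, HasDerivAt (deriv b) (deriv (deriv b) θ) θ := fun θ =>
    (hb.differentiable_deriv_two θ).hasDerivAt
  have hoff : ∀ j ∉ α₀, βh j = β₀ j := fun j hj => by
    rw [not_not.1 fun h => hj ((hsupp j).1 h), not_not.1 fun h => hj ((hα₀ j).2 h)]
  have hbound := linf_estimation_bound_general X α₀ hX (r := 1 / n) (by positivity) hlink hc₂ hvar
    (funext hy) (hmono.mono Ioi_subset_Ici_self)
    (hconc.subset Ioi_subset_Ici_self (convex_Ioi 0)) hpendiff hoff hτ hthresh hstat
  rw [norm_restrict_eq_biSup, gammaStar_eq_sSup_iSup_sum_abs] at hbound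
  rw [hγ]
  exact (norm_le_pi_norm (βh - β₀) j).trans hbound
end

section
/- Assume b : ℝ → ℝ is twice continuously differentiable and convex (b'' ≥ 0), and assume the penalty p_λ : [0,∞) → ℝ is increasing with p_λ(0) = 0 and p_λ(τ) > 0. Let β₀ ∈ B_{τ,κ} and let β̂ be a global minimizer of Q_n over B_{τ,κ}. Then the model size of β̂ satisfies ‖β̂‖₀ · p_λ(τ) ≤ Σ_{j=1}^p p_λ(|β₀_j|) + n⁻¹·εᵀX(β̂ − β₀). -/
open scoped BigOperators Classical

/-! Comparing `Q_n(β̂) ≤ Q_n(β₀)` bounds the penalty of `β̂` by that of `β₀` plus the gain in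
log-likelihood, scaled by `n⁻¹`. The log-likelihood is concave in the linear predictor, so this
gain is at most its linearization at `Xβ₀`, whose gradient there is `y − b'(Xβ₀) = ε`. Each of the
`‖β̂‖₀` nonzero coordinates has magnitude at least `τ` and so costs at least `p_λ(τ)`. -/

theorem tangent_line_le_of_convexOn {S : Set ℝ} {f : ℝ → ℝ} {f' x y : ℝ}
    (hf : ConvexOn ℝ S f) (hx : x ∈ S) (hy : y ∈ S) (hf' : HasDerivWithinAt f f' S x) :
    f x + f' * (y - x) ≤ f y := by
  rcases lt_trichotomy x y with hxy | rfl | hyx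
  · have h := hf.le_slope_of_hasDerivWithinAt hx hy hxy hf'
    rw [slope_def_field, le_div_iff₀ (sub_pos.2 hxy)] at h
    linarith
  · simp
  · have h := hf.slope_le_of_hasDerivWithinAt hy hx hyx hf'
    rw [slope_def_field, div_le_iff₀ (sub_pos.2 hyx)] at h
    linarith

/-- The log-likelihood of the responses `y` in the exponential family with cumulant function `b`,
as a function of the linear predictor `η` (`Xβ` in the model); it is not divided by the sample
size, and the terms that depend on `y` only are left out. -/
noncomputable def logLik {ι : Type*} [Fintype ι] (b : ℝ → ℝ) (y η : ι → ℝ) : ℝ :=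
  ∑ i, y i * η i - ∑ i, b (η i)

theorem logLik_sub_le_dotProduct {ι : Type*} [Fintype ι] {S : Set ℝ} {b : ℝ → ℝ}
    (hb : ConvexOn ℝ S b) {η₀ η μ : ι → ℝ} (hη₀ : ∀ i, η₀ i ∈ S) (hη : ∀ i, η i ∈ S)
    (hμ : ∀ i, HasDerivWithinAt b (μ i) S (η₀ i)) (ε : ι → ℝ) :
    logLik b (μ + ε) η - logLik b (μ + ε) η₀ ≤ ε ⬝ᵥ (η - η₀) := by
  simp only [logLik, dotProduct, ← Finset.sum_sub_distrib]
  refine Finset.sum_le_sum fun i _ => ?_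
  have htangent := tangent_line_le_of_convexOn hb (hη₀ i) (hη i) (hμ i)
  simp only [Pi.add_apply, Pi.sub_apply]
  linarith

theorem Qn_eq_sum_pen_sub_logLik {n p : ℕ} (X : Matrix (Fin n) (Fin p) ℝ) (y : Fin n → ℝ)
    (b pen : ℝ → ℝ) (β : Fin p → ℝ) :
    Qn X y b pen β = ∑ j, pen |β j| - 1 / (n : ℝ) * logLik b y (X.mulVec β) := by
  simp only [Qn, logLik]
  ring

theorem l0_mul_le_sum_pen {p : ℕ} {pen : ℝ → ℝ} (hmono : MonotoneOn pen (Set.Ici 0))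
    (hpen0 : 0 ≤ pen 0) {τ : ℝ} (hτ : 0 ≤ τ) {v : Fin p → ℝ}
    (hv : ∀ j, v j = 0 ∨ τ ≤ |v j|) :
    (l0 v : ℝ) * pen τ ≤ ∑ j, pen |v j| := by
  have hpen_nonneg (j : Fin p) : 0 ≤ pen |v j| :=
    hpen0.trans (hmono Set.self_mem_Ici (abs_nonneg (v j)) (abs_nonneg (v j)))
  have hpen_support (j : Fin p) (hj : v j ≠ 0) : pen τ ≤ pen |v j| :=
    hmono hτ (abs_nonneg (v j)) ((hv j).resolve_left hj)
  calc (l0 v : ℝ) * pen τ = l0 v • pen τ := (nsmul_eq_mul _ _).symm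
    _ ≤ ∑ j with v j ≠ 0, pen |v j| :=
      Finset.card_nsmul_le_sum _ _ _ fun j hj => hpen_support j (Finset.mem_filter.1 hj).2
    _ ≤ ∑ j, pen |v j| :=
      Finset.sum_le_sum_of_subset_of_nonneg (Finset.filter_subset _ _)
        fun j _ _ => hpen_nonneg j

theorem model_size_bound_general {n p : ℕ} {X : Matrix (Fin n) (Fin p) ℝ} {S : Set ℝ}
    {b : ℝ → ℝ} (hb : ConvexOn ℝ S b) {β₀ βh : Fin p → ℝ} (hβ₀S : ∀ i, X.mulVec β₀ i ∈ S)
    (hβhS : ∀ i, X.mulVec βh i ∈ S) {μ ε y : Fin n → ℝ}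
    (hμ : ∀ i, HasDerivWithinAt b (μ i) S (X.mulVec β₀ i)) (hy : ∀ i, y i = μ i + ε i)
    {pen : ℝ → ℝ} (hmono : MonotoneOn pen (Set.Ici 0)) (hpen0 : 0 ≤ pen 0)
    {τ : ℝ} (hτ : 0 ≤ τ) (hβh : ∀ j, βh j = 0 ∨ τ ≤ |βh j|)
    (hQ : Qn X y b pen βh ≤ Qn X y b pen β₀) :
    (l0 βh : ℝ) * pen τ ≤
      (∑ j, pen |β₀ j|) + (1 / (n : ℝ)) * ∑ i, ε i * X.mulVec (βh - β₀) i := by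
  obtain rfl : y = μ + ε := funext hy
  let ℓ (β : Fin p → ℝ) : ℝ := logLik b (μ + ε) (X.mulVec β)
  have hgain : ℓ βh - ℓ β₀ ≤ ε ⬝ᵥ X.mulVec (βh - β₀) := by
    rw [Matrix.mulVec_sub]
    exact logLik_sub_le_dotProduct hb hβ₀S hβhS hμ ε
  rw [Qn_eq_sum_pen_sub_logLik, Qn_eq_sum_pen_sub_logLik] at hQ
  calc (l0 βh : ℝ) * pen τ ≤ ∑ j, pen |βh j| := l0_mul_le_sum_pen hmono hpen0 hτ hβh
    _ ≤ ∑ j, pen |β₀ j| + 1 / (n : ℝ) * (ℓ βh - ℓ β₀) := by linarith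
    _ ≤ ∑ j, pen |β₀ j| + 1 / (n : ℝ) * ε ⬝ᵥ X.mulVec (βh - β₀) := by gcongr

/-- Deterministic bound (e077) underlying the sign-risk inequality of Theorem 3(a):
for convex `b` and an increasing penalty with `p_λ(0) = 0` and `p_λ(τ) > 0`, the model
size of the global minimizer `β̂` over `B_{τ,κ}` satisfies
`‖β̂‖₀·p_λ(τ) ≤ Σⱼ p_λ(|β₀_j|) + n⁻¹εᵀX(β̂ − β₀)`. -/
theorem model_size_bound {n p : ℕ} (hn : 0 < n) (hp : 0 < p)
    (X : Matrix (Fin n) (Fin p) ℝ)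
    (b : ℝ → ℝ) (hb : ContDiff ℝ 2 b)
    (hconv : ∀ θ : ℝ, 0 ≤ deriv (deriv b) θ)
    (β₀ : Fin p → ℝ) (ε : Fin n → ℝ) (y : Fin n → ℝ)
    (hy : ∀ i, y i = deriv b (X.mulVec β₀ i) + ε i)
    (pen : ℝ → ℝ) (hmono : MonotoneOn pen (Set.Ici 0)) (hpen0 : pen 0 = 0)
    (τ : ℝ) (hτ : 0 < τ) (hpenτ : 0 < pen τ) (κ : ℕ)
    (hβ₀ : β₀ ∈ Bset τ κ)
    (βh : Fin p → ℝ) (hβh : βh ∈ Bset τ κ)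
    (hmin : ∀ β ∈ Bset τ κ, Qn X y b pen βh ≤ Qn X y b pen β) :
    (l0 βh : ℝ) * pen τ ≤
      (∑ j, pen |β₀ j|) + (1 / (n : ℝ)) * ∑ i, ε i * X.mulVec (βh - β₀) i := by
  have hb' : Differentiable ℝ b := hb.differentiable two_ne_zero
  exact model_size_bound_general
    (convexOn_univ_of_deriv2_nonneg hb' hb.differentiable_deriv_two hconv)
    (fun _ => Set.mem_univ _) (fun _ => Set.mem_univ _)
    (fun _ => (hb' _).hasDerivAt.hasDerivWithinAt) hy hmono hpen0.ge hτ.le hβh.2 (hmin β₀ hβ₀)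
end
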